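/- arXiv:2401.03807 — 5 statements merged into one kernel-verified Lean document; each statement's English description precedes it below -/
import Mathlib

section
/- For every real number σ > 0, one has σ ≤ Σ_{k∈ℤ} exp(−πk²/σ²) ≤ 1 + σ. -/
/-!
For a nonnegative integrable `f : ℝ → ℝ` which increases on `(-∞, 0]` and decreases on `[0, ∞)`,
comparing the terms `k ≠ 0` with the integral of `f` over the adjacent unit interval towards `0`
gives `∑ f k ≤ f 0 + ∫ f`. For the Gaussian this is the upper bound. The lower bound comes from
Poisson summation: `∑ exp (-b k²)` is `√(π / b)` times a Gaussian sum whose term at `0` is `1`.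
-/

open MeasureTheory Real Set

theorem antitoneOn_comp_neg_of_monotoneOn {α β : Type*} [AddCommGroup α] [PartialOrder α]
    [IsOrderedAddMonoid α] [Preorder β] {f : α → β} (mono : MonotoneOn f (Iic 0)) :
    AntitoneOn (fun x ↦ f (-x)) (Ici 0) :=
  mono.comp_AntitoneOn (monotone_id.neg.antitoneOn _) fun _ hx ↦ by simpa using hx

section Unimodal

variable {f : ℝ → ℝ}

theorem summable_int_of_monotoneOn_of_antitoneOn (mono : MonotoneOn f (Iic 0))
    (anti : AntitoneOn f (Ici 0)) (integrable : Integrable f) (nonneg : ∀ x, 0 ≤ f x) :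
    Summable fun k : ℤ ↦ f k := by
  have anti_neg := antitoneOn_comp_neg_of_monotoneOn mono
  refine .of_nat_of_neg ?_ ?_
  · simpa using anti.summable_of_integrableOn_Ioi_zero integrable.integrableOn fun x _ ↦ nonneg x
  · simpa using anti_neg.summable_of_integrableOn_Ioi_zero integrable.comp_neg.integrableOn
      fun x _ ↦ nonneg (-x)

theorem tsum_int_le_apply_zero_add_integral (mono : MonotoneOn f (Iic 0))
    (anti : AntitoneOn f (Ici 0)) (integrable : Integrable f) (nonneg : ∀ x, 0 ≤ f x) :
    ∑' k : ℤ, f k ≤ f 0 + ∫ x, f x := by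
  have anti_neg := antitoneOn_comp_neg_of_monotoneOn mono
  have summable := summable_int_of_monotoneOn_of_antitoneOn mono anti integrable nonneg
  have tsum_pos_le : ∑' n : ℕ, f (n + 1 : ℕ) ≤ ∫ x in Ioi 0, f x :=
    anti.tsum_add_one_le_integral integrable.integrableOn fun x _ ↦ nonneg x
  have tsum_neg_le : ∑' n : ℕ, f (-(n + 1 : ℕ)) ≤ ∫ x in Iic 0, f x := by
    simpa only [integral_comp_neg_Ioi, neg_zero] using
      anti_neg.tsum_add_one_le_integral integrable.comp_neg.integrableOn fun x _ ↦ nonneg (-x)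
  have split_tsum :
      ∑' k : ℤ, f k = ∑' n : ℕ, f (n + 1 : ℕ) + f 0 + ∑' n : ℕ, f (-(n + 1 : ℕ)) := by
    have inj_pos : Function.Injective fun n : ℕ ↦ (n + 1 : ℤ) := fun m n h ↦ by simpa using h
    have inj_neg : Function.Injective fun n : ℕ ↦ (-(n + 1) : ℤ) := neg_injective.comp inj_pos
    have split := tsum_of_add_one_of_neg_add_one (f := fun k : ℤ ↦ f k)
      (summable.comp_injective inj_pos) (summable.comp_injective inj_neg)
    push_cast at split ⊢
    exact split
  have split_integral : ∫ x, f x = (∫ x in Iic 0, f x) + ∫ x in Ioi 0, f x :=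
    (intervalIntegral.integral_Iic_add_Ioi integrable.integrableOn integrable.integrableOn).symm
  linarith

end Unimodal

section Gaussian

variable {b : ℝ}

theorem antitoneOn_exp_neg_mul_sq (hb : 0 ≤ b) :
    AntitoneOn (fun x : ℝ ↦ exp (-b * x ^ 2)) (Ici 0) := by
  intro x hx y _ hxy
  simp only [neg_mul]
  have : 0 ≤ x := hx
  gcongr

theorem monotoneOn_exp_neg_mul_sq (hb : 0 ≤ b) :
    MonotoneOn (fun x : ℝ ↦ exp (-b * x ^ 2)) (Iic 0) := by
  simpa only [Function.comp_def, id_eq, neg_sq] using (antitoneOn_exp_neg_mul_sq hb).comp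
    (monotone_id.neg.antitoneOn (Iic 0)) fun _ hx ↦ by simpa using hx

theorem summable_exp_neg_mul_int_sq (hb : 0 < b) :
    Summable fun k : ℤ ↦ exp (-b * (k : ℝ) ^ 2) :=
  summable_int_of_monotoneOn_of_antitoneOn (monotoneOn_exp_neg_mul_sq hb.le)
    (antitoneOn_exp_neg_mul_sq hb.le) (integrable_exp_neg_mul_sq hb) fun _ ↦ (exp_pos _).le

theorem one_le_tsum_exp_neg_mul_int_sq (hb : 0 < b) :
    1 ≤ ∑' k : ℤ, exp (-b * (k : ℝ) ^ 2) := by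
  simpa using (summable_exp_neg_mul_int_sq hb).le_tsum 0 fun _ _ ↦ (exp_pos _).le

theorem tsum_exp_neg_mul_int_sq_le_one_add_sqrt (hb : 0 < b) :
    ∑' k : ℤ, exp (-b * (k : ℝ) ^ 2) ≤ 1 + √(π / b) := by
  have bound :=
    tsum_int_le_apply_zero_add_integral (monotoneOn_exp_neg_mul_sq hb.le)
      (antitoneOn_exp_neg_mul_sq hb.le) (integrable_exp_neg_mul_sq hb) fun _ ↦ (exp_pos _).le
  rw [integral_gaussian] at bound
  simpa using bound

theorem tsum_exp_neg_mul_int_sq_eq_sqrt_mul (hb : 0 < b) :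
    ∑' k : ℤ, exp (-b * (k : ℝ) ^ 2) =
      √(π / b) * ∑' k : ℤ, exp (-(π ^ 2 / b) * (k : ℝ) ^ 2) := by
  have poisson := Real.tsum_exp_neg_mul_int_sq (div_pos hb pi_pos)
  rwa [← sqrt_eq_rpow, one_div, ← sqrt_inv, inv_div, neg_mul, mul_div_cancel₀ _ pi_ne_zero,
    neg_div, div_div_eq_mul_div, ← sq] at poisson

theorem sqrt_le_tsum_exp_neg_mul_int_sq (hb : 0 < b) :
    √(π / b) ≤ ∑' k : ℤ, exp (-b * (k : ℝ) ^ 2) := by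
  rw [tsum_exp_neg_mul_int_sq_eq_sqrt_mul hb]
  exact le_mul_of_one_le_right (sqrt_nonneg _) (one_le_tsum_exp_neg_mul_int_sq (by positivity))

end Gaussian

/-- For every real number `σ > 0`, one has
`σ ≤ Σ_{k ∈ ℤ} exp(−π k² / σ²) ≤ 1 + σ`. -/
theorem stmt_0 (σ : ℝ) (hσ : 0 < σ) :
    σ ≤ (∑' k : ℤ, Real.exp (-Real.pi * (k : ℝ) ^ 2 / σ ^ 2)) ∧
      (∑' k : ℤ, Real.exp (-Real.pi * (k : ℝ) ^ 2 / σ ^ 2)) ≤ 1 + σ := by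
  have hb : 0 < π / σ ^ 2 := by positivity
  have sqrt_eq : √(π / (π / σ ^ 2)) = σ := by
    rw [div_div_cancel₀ pi_ne_zero, sqrt_sq hσ.le]
  have exponent_eq (k : ℤ) : -π * (k : ℝ) ^ 2 / σ ^ 2 = -(π / σ ^ 2) * (k : ℝ) ^ 2 := by ring
  simp only [exponent_eq]
  constructor
  · simpa only [sqrt_eq] using sqrt_le_tsum_exp_neg_mul_int_sq hb
  · simpa only [sqrt_eq] using tsum_exp_neg_mul_int_sq_le_one_add_sqrt hb
end

section
/- Let m ≥ 1 be an integer and σ > 0, σ' ≥ σ/√(2π) be real numbers. Then Σ_{x∈ℤ^m, ‖x‖ > σ'·√m} exp(−π‖x‖²/σ²) ≤ ((σ'/σ)·√(2πe)·exp(−πσ'²/σ²))^m · Σ_{x∈ℤ^m} exp(−π‖x‖²/σ²). -/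
/-!
Let `ρ_s(x) = exp (-π ‖x‖² / s²)`. For any `τ ≥ σ`, every `x` with `‖x‖ ≥ r √m` satisfies
`ρ_σ(x) ≤ exp (-π r² (1/σ² - 1/τ²)) ^ m * ρ_τ(x)`. Passing from `ρ_τ(ℤ^m)` back to `ρ_σ(ℤ^m)` costs
a factor `(τ/σ)^m`: both masses are `m`-th powers, and in dimension one Poisson summation gives
`ρ_τ(ℤ) = τ ∑ n, exp (-π τ² n²)`, where the sum decreases in `τ`. The resulting bound
`(τ/σ * exp (-π r² (1/σ² - 1/τ²)))^m * ρ_σ(ℤ^m)` is smallest at `τ = √(2π) r`, and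
`r = σ'` is the claim.
-/

open Real

theorem summable_norm_and_hasSum_prod_pi {R ι : Type*} [NormedCommRing R] [hι : Fintype ι]
    {β : ι → Type*} {f : ∀ i, β i → R} {s : ι → R} (hf : ∀ i, Summable fun b => ‖f i b‖)
    (hs : ∀ i, HasSum (f i) (s i)) :
    Summable (fun x : ∀ i, β i => ‖∏ i, f i (x i)‖) ∧
      HasSum (fun x : ∀ i, β i => ∏ i, f i (x i)) (∏ i, s i) := by
  revert β s
  refine @(Fintype.induction_empty_option ?_ ?_ ?_ ι (h_fintype := hι))
  · intro ι κ _ e ih β f s hf hs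
    let := Fintype.ofEquiv κ e.symm
    have h := ih (fun i => hf (e i)) (fun i => hs (e i))
    rw [e.prod_comp s] at h
    have hprod (x : ∀ k, β k) : ∏ i, f (e i) (x (e i)) = ∏ k, f k (x k) :=
      e.prod_comp fun k => f k (x k)
    rw [← (Equiv.piCongrLeft β e).summable_iff, ← (Equiv.piCongrLeft β e).hasSum_iff]
    simpa only [Function.comp_def, ← hprod, Equiv.piCongrLeft_apply_apply] using h
  · intro β f s _ _
    exact ⟨.of_finite, by simp⟩
  · intro ι _ ih β f s hf hs
    let rest (x : ∀ i, β (some i)) : R := ∏ i, f (some i) (x i)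
    obtain ⟨hnorm, hsum⟩ : Summable (fun x => ‖rest x‖) ∧ HasSum rest (∏ i, s (some i)) :=
      ih (fun i => hf (some i)) (fun i => hs (some i))
    have hmul_norm := (hf none).mul_norm hnorm
    have hmul := (hs none).mul hsum
      (summable_mul_of_summable_norm' (hf none) (hs none).summable hnorm hsum.summable)
    rw [← Equiv.piOptionEquivProd.symm.summable_iff, ← Equiv.piOptionEquivProd.symm.hasSum_iff]
    simp only [Function.comp_def, Fintype.prod_option]
    exact ⟨hmul_norm, hmul⟩

section IntegerLine

variable {σ τ : ℝ}

theorem summable_exp_neg_pi_mul_int_sq {a : ℝ} (ha : 0 < a) :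
    Summable fun n : ℤ => exp (-π * a * (n : ℝ) ^ 2) := by
  simpa [mul_assoc] using summable_pow_mul_jacobiTheta₂_term_bound 0 ha 0

theorem summable_exp_neg_pi_mul_int_sq_div_sq (hσ : 0 < σ) :
    Summable fun n : ℤ => exp (-π * (n : ℝ) ^ 2 / σ ^ 2) := by
  refine (summable_exp_neg_pi_mul_int_sq (inv_pos.2 (pow_pos hσ 2))).congr fun n => ?_
  congr 1
  ring

theorem tsum_exp_neg_pi_mul_int_sq_div_sq (hσ : 0 < σ) :
    ∑' n : ℤ, exp (-π * (n : ℝ) ^ 2 / σ ^ 2) = σ * ∑' n : ℤ, exp (-π * σ ^ 2 * (n : ℝ) ^ 2) := by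
  have poisson := Real.tsum_exp_neg_mul_int_sq (pow_pos hσ 2)
  rw [← sqrt_eq_rpow, sqrt_sq hσ.le] at poisson
  rw [poisson, ← mul_assoc, mul_one_div_cancel hσ.ne', one_mul]
  simp only [div_mul_eq_mul_div]

theorem tsum_exp_neg_pi_mul_int_sq_div_sq_le (hσ : 0 < σ) (hστ : σ ≤ τ) :
    ∑' n : ℤ, exp (-π * (n : ℝ) ^ 2 / τ ^ 2) ≤
      τ / σ * ∑' n : ℤ, exp (-π * (n : ℝ) ^ 2 / σ ^ 2) := by
  have hτ : 0 < τ := hσ.trans_le hστ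
  have dual_le : ∑' n : ℤ, exp (-π * τ ^ 2 * (n : ℝ) ^ 2) ≤
      ∑' n : ℤ, exp (-π * σ ^ 2 * (n : ℝ) ^ 2) := by
    refine (summable_exp_neg_pi_mul_int_sq (pow_pos hτ 2)).tsum_le_tsum (fun n => ?_)
      (summable_exp_neg_pi_mul_int_sq (pow_pos hσ 2))
    simp only [neg_mul]
    gcongr
  rw [tsum_exp_neg_pi_mul_int_sq_div_sq hτ, tsum_exp_neg_pi_mul_int_sq_div_sq hσ, ← mul_assoc,
    div_mul_cancel₀ τ hσ.ne']
  gcongr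

end IntegerLine

section IntegerLattice

variable {ι : Type*} [Fintype ι] {σ τ : ℝ}

/-- The Gaussian weight `ρ_σ(x) = exp (-π ‖x‖² / σ²)` of width `σ` at the integer point `x`. The
squared Euclidean norm is written out as a sum, the norm on `ι → ℝ` being the supremum norm. -/
noncomputable def latticeGaussian (σ : ℝ) (x : ι → ℤ) : ℝ :=
  exp (-π * (∑ i, (x i : ℝ) ^ 2) / σ ^ 2)

theorem latticeGaussian_nonneg (σ : ℝ) (x : ι → ℤ) : 0 ≤ latticeGaussian σ x :=
  (exp_pos _).le

theorem latticeGaussian_eq_prod (σ : ℝ) (x : ι → ℤ) :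
    latticeGaussian σ x = ∏ i, exp (-π * (x i : ℝ) ^ 2 / σ ^ 2) := by
  rw [latticeGaussian, Finset.mul_sum, Finset.sum_div, exp_sum]

theorem hasSum_latticeGaussian (hσ : 0 < σ) :
    HasSum (latticeGaussian (ι := ι) σ)
      ((∑' n : ℤ, exp (-π * (n : ℝ) ^ 2 / σ ^ 2)) ^ Fintype.card ι) := by
  have hline := summable_exp_neg_pi_mul_int_sq_div_sq hσ
  have hprod := (summable_norm_and_hasSum_prod_pi (ι := ι) (fun _ => hline.norm)
    fun _ => hline.hasSum).2
  simpa only [← latticeGaussian_eq_prod, Finset.prod_const, Finset.card_univ] using hprod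

theorem tsum_latticeGaussian_le (hσ : 0 < σ) (hστ : σ ≤ τ) :
    ∑' x : ι → ℤ, latticeGaussian τ x ≤
      (τ / σ) ^ Fintype.card ι * ∑' x : ι → ℤ, latticeGaussian σ x := by
  rw [(hasSum_latticeGaussian (hσ.trans_le hστ)).tsum_eq, (hasSum_latticeGaussian hσ).tsum_eq,
    ← mul_pow]
  gcongr
  exact tsum_exp_neg_pi_mul_int_sq_div_sq_le hσ hστ

theorem latticeGaussian_le_exp_mul (hσ : 0 < σ) (hστ : σ ≤ τ) {t : ℝ} {x : ι → ℤ}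
    (ht : t ≤ ∑ i, (x i : ℝ) ^ 2) :
    latticeGaussian σ x ≤ exp (-π * t * (1 / σ ^ 2 - 1 / τ ^ 2)) * latticeGaussian τ x := by
  have hinv : 0 ≤ 1 / σ ^ 2 - 1 / τ ^ 2 := sub_nonneg.2 (by gcongr)
  rw [latticeGaussian, latticeGaussian, ← exp_add]
  gcongr
  calc -π * (∑ i, (x i : ℝ) ^ 2) / σ ^ 2
      = -(π * (∑ i, (x i : ℝ) ^ 2) * (1 / σ ^ 2 - 1 / τ ^ 2)) +
          -π * (∑ i, (x i : ℝ) ^ 2) / τ ^ 2 := by ring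
    _ ≤ -(π * t * (1 / σ ^ 2 - 1 / τ ^ 2)) + -π * (∑ i, (x i : ℝ) ^ 2) / τ ^ 2 := by gcongr
    _ = -π * t * (1 / σ ^ 2 - 1 / τ ^ 2) + -π * (∑ i, (x i : ℝ) ^ 2) / τ ^ 2 := by ring

theorem tsum_subtype_latticeGaussian_le_exp_mul (hσ : 0 < σ) (hστ : σ ≤ τ) {t : ℝ}
    {S : Set (ι → ℤ)} (hS : ∀ x ∈ S, t ≤ ∑ i, (x i : ℝ) ^ 2) :
    ∑' x : S, latticeGaussian σ x.1 ≤
      exp (-π * t * (1 / σ ^ 2 - 1 / τ ^ 2)) * ∑' x : ι → ℤ, latticeGaussian τ x := by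
  have hsum_σ : Summable (latticeGaussian (ι := ι) σ) := (hasSum_latticeGaussian hσ).summable
  have hsum_τ : Summable (latticeGaussian (ι := ι) τ) :=
    (hasSum_latticeGaussian (hσ.trans_le hστ)).summable
  set c := exp (-π * t * (1 / σ ^ 2 - 1 / τ ^ 2))
  calc ∑' x : S, latticeGaussian σ x.1
      ≤ ∑' x : S, c * latticeGaussian τ x.1 :=
        (hsum_σ.subtype S).tsum_le_tsum
          (fun x => latticeGaussian_le_exp_mul hσ hστ (hS x x.2)) ((hsum_τ.subtype S).mul_left c)
    _ = c * ∑' x : S, latticeGaussian τ x.1 := tsum_mul_left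
    _ ≤ c * ∑' x : ι → ℤ, latticeGaussian τ x := by
        gcongr
        exact hsum_τ.tsum_subtype_le _ S (latticeGaussian_nonneg τ)

theorem tsum_subtype_latticeGaussian_le_pow_mul (hσ : 0 < σ) (hστ : σ ≤ τ) {r : ℝ}
    {S : Set (ι → ℤ)} (hS : ∀ x ∈ S, Fintype.card ι * r ^ 2 ≤ ∑ i, (x i : ℝ) ^ 2) :
    ∑' x : S, latticeGaussian σ x.1 ≤
      (τ / σ * exp (-π * r ^ 2 * (1 / σ ^ 2 - 1 / τ ^ 2))) ^ Fintype.card ι *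
        ∑' x : ι → ℤ, latticeGaussian σ x := by
  calc ∑' x : S, latticeGaussian σ x.1
      ≤ exp (-π * (Fintype.card ι * r ^ 2) * (1 / σ ^ 2 - 1 / τ ^ 2)) *
          ∑' x : ι → ℤ, latticeGaussian τ x := tsum_subtype_latticeGaussian_le_exp_mul hσ hστ hS
    _ = exp (-π * r ^ 2 * (1 / σ ^ 2 - 1 / τ ^ 2)) ^ Fintype.card ι *
          ∑' x : ι → ℤ, latticeGaussian τ x := by
        rw [← exp_nat_mul]
        ring_nf
    _ ≤ exp (-π * r ^ 2 * (1 / σ ^ 2 - 1 / τ ^ 2)) ^ Fintype.card ι *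
          ((τ / σ) ^ Fintype.card ι * ∑' x : ι → ℤ, latticeGaussian σ x) := by
        gcongr
        exact tsum_latticeGaussian_le hσ hστ
    _ = _ := by ring

end IntegerLattice

theorem mul_sqrt_two_pi_div_mul_exp_eq {r : ℝ} (hr : r ≠ 0) (σ : ℝ) :
    r * √(2 * π) / σ * exp (-π * r ^ 2 * (1 / σ ^ 2 - 1 / (r * √(2 * π)) ^ 2)) =
      r / σ * √(2 * π * exp 1) * exp (-π * r ^ 2 / σ ^ 2) := by
  have hexponent : -π * r ^ 2 * (1 / σ ^ 2 - 1 / (r * √(2 * π)) ^ 2) =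
      1 / 2 + -π * r ^ 2 / σ ^ 2 := by
    rw [mul_pow, sq_sqrt two_pi_pos.le, mul_sub]
    field_simp
    ring
  rw [hexponent, exp_add, exp_half, sqrt_mul two_pi_pos.le]
  ring

/-- Gaussian tail bound over the integer lattice (adapted from Banaszczyk):
for `m ≥ 1`, `σ > 0`, `σ' ≥ σ/√(2π)`,
`Σ_{x ∈ ℤ^m, ‖x‖ > σ'√m} ρ_σ(x) ≤ ((σ'/σ)·√(2πe)·exp(−πσ'²/σ²))^m · ρ_σ(ℤ^m)`,
where `ρ_σ(x) = exp(−π‖x‖²/σ²)`. -/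
theorem stmt_1 (m : ℕ) (hm : 1 ≤ m) (σ σ' : ℝ) (hσ : 0 < σ)
    (hσ' : σ / Real.sqrt (2 * Real.pi) ≤ σ') :
    (∑' x : {x : Fin m → ℤ // σ' * Real.sqrt m < Real.sqrt (∑ i, ((x i : ℝ)) ^ 2)},
        Real.exp (-Real.pi * (∑ i, ((x.1 i : ℝ)) ^ 2) / σ ^ 2))
      ≤ (σ' / σ * Real.sqrt (2 * Real.pi * Real.exp 1) *
            Real.exp (-Real.pi * σ' ^ 2 / σ ^ 2)) ^ m *
        ∑' x : Fin m → ℤ, Real.exp (-Real.pi * (∑ i, ((x i : ℝ)) ^ 2) / σ ^ 2) := by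
  have hsqrt : 0 < √(2 * π) := sqrt_pos.2 two_pi_pos
  have hσ'_pos : 0 < σ' := (div_pos hσ hsqrt).trans_le hσ'
  have hτ : σ ≤ σ' * √(2 * π) := (div_le_iff₀ hsqrt).1 hσ'
  have hS : ∀ x ∈ {x : Fin m → ℤ | σ' * √m < √(∑ i, (x i : ℝ) ^ 2)},
      Fintype.card (Fin m) * σ' ^ 2 ≤ ∑ i, (x i : ℝ) ^ 2 := fun x hx => by
    have hsq := (lt_sqrt (by positivity)).1 hx
    rw [mul_pow, sq_sqrt m.cast_nonneg] at hsq
    rw [Fintype.card_fin, mul_comm]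
    exact hsq.le
  have tail_le := tsum_subtype_latticeGaussian_le_pow_mul hσ hτ hS
  rwa [mul_sqrt_two_pi_div_mul_exp_eq hσ'_pos.ne', Fintype.card_fin] at tail_le
end

section
/- Let m ≥ 1 and q ≥ 2 be integers and σ > 0 a real number with q ≥ 2σ√m. Then for every x ∈ ℤ^m ∩ (−q/2, q/2]^m one has D_{ℤ^m,σ}(x) ≤ ϑ_{σ,q}(x) ≤ D_{ℤ^m,σ}(x) + exp(−q²/(4σ²)) and √(D_{ℤ^m,σ}(x)) ≤ √(ϑ_{σ,q}(x)) ≤ √(D_{ℤ^m,σ}(x)) + exp(−q²/(8σ²)). -/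
/-- `ρ_σ(ℤ^m) = Σ_{k ∈ ℤ^m} exp(−π‖k‖²/σ²)`. -/
noncomputable def rhoZm (σ : ℝ) (m : ℕ) : ℝ :=
  ∑' k : Fin m → ℤ, Real.exp (-Real.pi * (∑ i, ((k i : ℝ)) ^ 2) / σ ^ 2)

/-- Folded discrete Gaussian `ϑ_{σ,q}` on `(ℤ/qℤ)^m`, via the representative
`x̄ ∈ ℤ^m ∩ (−q/2, q/2]^m` of each coordinate (`ZMod.valMinAbs`). -/
noncomputable def thetaM (σ : ℝ) (q m : ℕ) (x : Fin m → ZMod q) : ℝ :=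
  (∑' k : Fin m → ℤ,
      Real.exp (-Real.pi * (∑ i, (((x i).valMinAbs : ℝ) + q * k i) ^ 2) / σ ^ 2)) / rhoZm σ m

/-- Discrete Gaussian `D_{ℤ^m,σ}(x) = ρ_σ(x)/ρ_σ(ℤ^m)`. -/
noncomputable def Dgauss (σ : ℝ) (m : ℕ) (x : Fin m → ℤ) : ℝ :=
  Real.exp (-Real.pi * (∑ i, ((x i : ℝ)) ^ 2) / σ ^ 2) / rhoZm σ m

/-!
Poisson summation gives `ρ_{sσ}(ℤ) ≤ s ρ_σ(ℤ)` for `s ≥ 1`, and `ρ_σ(ℤ^m) = ρ_σ(ℤ)^m`, so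
`ρ_{sσ}(ℤ^m) ≤ s^m ρ_σ(ℤ^m)`. Where `‖y‖² ≥ R` one has
`ρ_σ(y) ≤ exp(-π(1 - s⁻²)R/σ²) ρ_{sσ}(y)`, so the part of `ℤ^m` outside the open ball of radius `√R`
carries at most `s^m exp(-π(1 - s⁻²)R/σ²)` of the mass of `ρ_σ` (Banaszczyk's tail bound).
For `s = 2` and `R ≥ mσ²` this is at most `exp(-R/σ²)`, because `2 ≤ e` and `3π/4 ≥ 2`.
All points of `x + qℤ^m` other than `x` itself have norm at least `q/2`, so `R = (q/2)²` applies.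
-/

noncomputable section

open Real

lemma sqrt_add_le_sqrt_add_sqrt {a b : ℝ} (ha : 0 ≤ a) (hb : 0 ≤ b) : √(a + b) ≤ √a + √b := by
  simpa only [sqrt_eq_rpow] using rpow_add_le_add_rpow ha hb one_half_pos.le one_half_lt_one.le

lemma add_smul_injective {R M : Type*} [Ring R] [IsDomain R] [AddCommGroup M] [Module R M]
    [Module.IsTorsionFree R M] {c : R} (hc : c ≠ 0) (x : M) :
    Function.Injective fun k : M ↦ x + c • k :=
  (add_right_injective x).comp (smul_right_injective M hc)

lemma hasSum_prod_fin_pi_of_nonneg {m : ℕ} {β : Fin m → Type*} {f : ∀ i, β i → ℝ}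
    {a : Fin m → ℝ} (hf₀ : ∀ i b, 0 ≤ f i b) (hf : ∀ i, HasSum (f i) (a i)) :
    HasSum (fun k : ∀ i, β i ↦ ∏ i, f i (k i)) (∏ i, a i) := by
  induction m with
  | zero => simp
  | succ m ih =>
    have htail := ih (fun i ↦ hf₀ i.succ) (fun i ↦ hf i.succ)
    have hsummable := (hf 0).summable.mul_of_nonneg htail.summable (hf₀ 0)
      (fun k ↦ Finset.prod_nonneg fun i _ ↦ hf₀ i.succ (k i))
    rw [← (Fin.consEquiv β).hasSum_iff]
    simpa only [Function.comp_def, Fin.consEquiv_apply, Fin.prod_univ_succ, Fin.cons_zero,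
      Fin.cons_succ] using (hf 0).mul htail hsummable

section IntGaussian

variable {σ s : ℝ}

lemma summable_int_exp_neg_pi_sq_div (hσ : 0 < σ) :
    Summable fun n : ℤ ↦ exp (-π * n ^ 2 / σ ^ 2) := by
  refine (summable_pow_mul_jacobiTheta₂_term_bound 0 (T := (σ ^ 2)⁻¹) (by positivity) 0).congr
    fun n ↦ ?_
  rw [pow_zero, one_mul]
  ring_nf

lemma tsum_int_exp_neg_pi_sq_div_eq_mul (hσ : 0 < σ) :
    ∑' n : ℤ, exp (-π * n ^ 2 / σ ^ 2) = σ * ∑' n : ℤ, exp (-π * σ ^ 2 * n ^ 2) := by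
  have hpoisson := Real.tsum_exp_neg_mul_int_sq (a := (σ ^ 2)⁻¹) (by positivity)
  rw [← sqrt_eq_rpow, sqrt_inv, sqrt_sq hσ.le, one_div, inv_inv] at hpoisson
  simpa only [div_eq_mul_inv, inv_inv, mul_right_comm] using hpoisson

-- On the dual side of Poisson summation every term decreases when the width grows.
lemma tsum_int_exp_neg_pi_sq_div_mul_le (hσ : 0 < σ) (hs : 1 ≤ s) :
    ∑' n : ℤ, exp (-π * n ^ 2 / (s * σ) ^ 2) ≤ s * ∑' n : ℤ, exp (-π * n ^ 2 / σ ^ 2) := by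
  have hdual {τ : ℝ} (hτ : 0 < τ) : Summable fun n : ℤ ↦ exp (-π * τ ^ 2 * n ^ 2) := by
    refine (summable_int_exp_neg_pi_sq_div (inv_pos.mpr hτ)).congr fun n ↦ ?_
    rw [inv_pow, div_inv_eq_mul, mul_right_comm]
  have hs₀ : 0 < s := by linarith
  have hterm (n : ℤ) : exp (-π * (s * σ) ^ 2 * n ^ 2) ≤ exp (-π * σ ^ 2 * n ^ 2) := by
    simp only [exp_le_exp, neg_mul, neg_le_neg_iff]
    gcongr
    exact le_mul_of_one_le_left hσ.le hs
  rw [tsum_int_exp_neg_pi_sq_div_eq_mul (mul_pos hs₀ hσ), tsum_int_exp_neg_pi_sq_div_eq_mul hσ,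
    ← mul_assoc]
  exact mul_le_mul_of_nonneg_left
    ((hdual (mul_pos hs₀ hσ)).tsum_le_tsum hterm (hdual hσ)) (mul_pos hs₀ hσ).le

end IntGaussian

/-- The Gaussian function `ρ_σ` of the paper, restricted to the lattice `ℤ^m`. -/
def gaussianWeight (σ : ℝ) {m : ℕ} (k : Fin m → ℤ) : ℝ :=
  exp (-π * (∑ i, (k i : ℝ) ^ 2) / σ ^ 2)

section GaussianWeight

variable {m : ℕ} {σ s R : ℝ}

lemma gaussianWeight_pos (σ : ℝ) (k : Fin m → ℤ) : 0 < gaussianWeight σ k := exp_pos _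

lemma hasSum_gaussianWeight (hσ : 0 < σ) :
    HasSum (gaussianWeight σ (m := m)) ((∑' n : ℤ, exp (-π * n ^ 2 / σ ^ 2)) ^ m) := by
  have hprod := hasSum_prod_fin_pi_of_nonneg (m := m) (fun _ _ ↦ (exp_pos _).le)
    (fun _ ↦ (summable_int_exp_neg_pi_sq_div hσ).hasSum)
  simpa only [← exp_sum, ← Finset.sum_div, ← Finset.mul_sum, Finset.prod_const,
    Finset.card_univ, Fintype.card_fin] using! hprod

lemma rhoZm_pos (hσ : 0 < σ) : 0 < rhoZm σ m :=
  (hasSum_gaussianWeight hσ).summable.tsum_pos (fun k ↦ (gaussianWeight_pos σ k).le) 0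
    (gaussianWeight_pos σ 0)

lemma Dgauss_nonneg (hσ : 0 < σ) (x : Fin m → ℤ) : 0 ≤ Dgauss σ m x :=
  div_nonneg (exp_pos _).le (rhoZm_pos hσ).le

lemma rhoZm_mul_le (hσ : 0 < σ) (hs : 1 ≤ s) : rhoZm (s * σ) m ≤ s ^ m * rhoZm σ m := by
  have hpow {τ : ℝ} (hτ : 0 < τ) : rhoZm τ m = (∑' n : ℤ, exp (-π * n ^ 2 / τ ^ 2)) ^ m :=
    (hasSum_gaussianWeight hτ).tsum_eq
  rw [hpow (by positivity), hpow hσ, ← mul_pow]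
  exact pow_le_pow_left₀ (tsum_nonneg fun _ ↦ (exp_pos _).le)
    (tsum_int_exp_neg_pi_sq_div_mul_le hσ hs) m

lemma gaussianWeight_le_exp_mul_gaussianWeight_mul (hσ : 0 < σ) (hs : 1 ≤ s) {k : Fin m → ℤ}
    (hR : R ≤ ∑ i, (k i : ℝ) ^ 2) :
    gaussianWeight σ k ≤
      exp (-π * (1 - (s ^ 2)⁻¹) * R / σ ^ 2) * gaussianWeight (s * σ) k := by
  have hs' : 0 ≤ 1 - (s ^ 2)⁻¹ := sub_nonneg.mpr (inv_le_one_of_one_le₀ (one_le_pow₀ hs))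
  simp only [gaussianWeight, ← exp_add, exp_le_exp]
  set N := ∑ i, (k i : ℝ) ^ 2
  calc -π * N / σ ^ 2
      = -(π * (1 - (s ^ 2)⁻¹) * N / σ ^ 2) + -π * N / (s * σ) ^ 2 := by field_simp; ring
    _ ≤ -(π * (1 - (s ^ 2)⁻¹) * R / σ ^ 2) + -π * N / (s * σ) ^ 2 := by gcongr
    _ = -π * (1 - (s ^ 2)⁻¹) * R / σ ^ 2 + -π * N / (s * σ) ^ 2 := by ring

lemma tsum_gaussianWeight_comp_le_pow_mul_exp {ι : Type*} {y : ι → Fin m → ℤ}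
    (hσ : 0 < σ) (hs : 1 ≤ s) (hy : Function.Injective y)
    (hR : ∀ j, R ≤ ∑ i, (y j i : ℝ) ^ 2) :
    ∑' j, gaussianWeight σ (y j) ≤
      s ^ m * exp (-π * (1 - (s ^ 2)⁻¹) * R / σ ^ 2) * rhoZm σ m := by
  set c := exp (-π * (1 - (s ^ 2)⁻¹) * R / σ ^ 2)
  have hwide := (hasSum_gaussianWeight (m := m) (σ := s * σ) (by positivity)).summable
  have hnarrow := (hasSum_gaussianWeight (m := m) hσ).summable
  calc ∑' j, gaussianWeight σ (y j)
      ≤ ∑' j, c * gaussianWeight (s * σ) (y j) :=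
        (hnarrow.comp_injective hy).tsum_le_tsum
          (fun j ↦ gaussianWeight_le_exp_mul_gaussianWeight_mul hσ hs (hR j))
          ((hwide.comp_injective hy).mul_left c)
    _ = c * ∑' j, gaussianWeight (s * σ) (y j) := tsum_mul_left
    _ ≤ c * rhoZm (s * σ) m := by
        gcongr
        exact tsum_comp_le_tsum_of_inj hwide (fun k ↦ (gaussianWeight_pos _ k).le) hy
    _ ≤ c * (s ^ m * rhoZm σ m) := by gcongr; exact rhoZm_mul_le hσ hs
    _ = s ^ m * c * rhoZm σ m := by ring

lemma two_pow_mul_exp_neg_le_exp_neg {t : ℝ} (ht : m ≤ t) :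
    2 ^ m * exp (-π * (3 / 4) * t) ≤ exp (-t) := by
  calc 2 ^ m * exp (-π * (3 / 4) * t)
      ≤ exp 1 ^ m * exp (-π * (3 / 4) * t) := by gcongr; exact exp_one_gt_two.le
    _ = exp (m + -π * (3 / 4) * t) := by rw [← exp_nat_mul, mul_one, exp_add]
    _ ≤ exp (-t) := exp_le_exp.mpr (by nlinarith [pi_gt_d2, m.cast_nonneg (α := ℝ)])

lemma tsum_gaussianWeight_comp_le_exp {ι : Type*} {y : ι → Fin m → ℤ} (hσ : 0 < σ)
    (hy : Function.Injective y) (hmR : m * σ ^ 2 ≤ R) (hR : ∀ j, R ≤ ∑ i, (y j i : ℝ) ^ 2) :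
    ∑' j, gaussianWeight σ (y j) ≤ exp (-(R / σ ^ 2)) * rhoZm σ m := by
  refine (tsum_gaussianWeight_comp_le_pow_mul_exp hσ one_le_two hy hR).trans ?_
  have ht : m ≤ R / σ ^ 2 := (le_div_iff₀ (by positivity)).mpr hmR
  have hexp : -π * (1 - (2 ^ 2)⁻¹) * R / σ ^ 2 = -π * (3 / 4) * (R / σ ^ 2) := by ring
  rw [hexp]
  exact mul_le_mul_of_nonneg_right (two_pow_mul_exp_neg_le_exp_neg ht) (rhoZm_pos hσ).le

end GaussianWeight

section Folding

variable {m q : ℕ} {σ : ℝ} {x : Fin m → ℤ}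

lemma sq_half_le_sum_add_smul_sq {k : Fin m → ℤ} (hx : ∀ i, |(x i : ℝ)| ≤ q / 2) (hk : k ≠ 0) :
    ((q : ℝ) / 2) ^ 2 ≤ ∑ i, (((x + (q : ℤ) • k) i : ℤ) : ℝ) ^ 2 := by
  obtain ⟨i, hki⟩ := Function.ne_iff.mp hk
  have hqk : (q : ℝ) ≤ |(q * k i : ℝ)| := by
    rw [abs_mul, Nat.abs_cast]
    exact le_mul_of_one_le_right q.cast_nonneg (by exact_mod_cast Int.one_le_abs hki)
  have hcoord : (q : ℝ) / 2 ≤ |(((x + (q : ℤ) • k) i : ℤ) : ℝ)| := by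
    simp only [Pi.add_apply, Pi.smul_apply, smul_eq_mul, Int.cast_add, Int.cast_mul,
      Int.cast_natCast]
    rw [add_comm]
    linarith [hx i, abs_sub_abs_le_abs_add (q * k i : ℝ) (x i)]
  calc ((q : ℝ) / 2) ^ 2 ≤ (((x + (q : ℤ) • k) i : ℤ) : ℝ) ^ 2 :=
        sq_le_sq.mpr (by rwa [abs_of_nonneg (by positivity)])
    _ ≤ _ := Finset.single_le_sum (f := fun i ↦ (((x + (q : ℤ) • k) i : ℤ) : ℝ) ^ 2)
        (fun _ _ ↦ sq_nonneg _) (Finset.mem_univ i)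

lemma valMinAbs_intCast_eq_self {a : ℤ} (ha : -(q : ℝ) / 2 < a ∧ (a : ℝ) ≤ q / 2) :
    (a : ZMod q).valMinAbs = a := by
  have hq : (0 : ℝ) < q := by linarith
  have : NeZero q := ⟨Nat.cast_ne_zero.mp hq.ne'⟩
  refine (ZMod.valMinAbs_spec _ _).mpr ⟨rfl, ?_, ?_⟩
  · exact_mod_cast (by linarith : -(q : ℝ) < a * 2)
  · exact_mod_cast (by linarith : (a : ℝ) * 2 ≤ q)

lemma thetaM_intCast (hx : ∀ i, -(q : ℝ) / 2 < (x i : ℝ) ∧ (x i : ℝ) ≤ (q : ℝ) / 2) :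
    thetaM σ q m (fun i ↦ (x i : ZMod q)) =
      (∑' k, gaussianWeight σ (x + (q : ℤ) • k)) / rhoZm σ m := by
  simp only [thetaM, gaussianWeight, valMinAbs_intCast_eq_self (hx _), Pi.add_apply,
    Pi.smul_apply, smul_eq_mul, Int.cast_add, Int.cast_mul, Int.cast_natCast]

lemma thetaM_intCast_eq_Dgauss_add (hσ : 0 < σ) (hq : q ≠ 0)
    (hx : ∀ i, -(q : ℝ) / 2 < (x i : ℝ) ∧ (x i : ℝ) ≤ (q : ℝ) / 2) :
    thetaM σ q m (fun i ↦ (x i : ZMod q)) =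
      Dgauss σ m x +
        (∑' k : ({0}ᶜ : Set (Fin m → ℤ)), gaussianWeight σ (x + (q : ℤ) • k.1)) / rhoZm σ m := by
  have hq' : (q : ℤ) ≠ 0 := by exact_mod_cast hq
  have hcoset := (hasSum_gaussianWeight hσ).summable.comp_injective (add_smul_injective hq' x)
  have hsplit := hcoset.tsum_subtype_add_tsum_subtype_compl {0}
  rw [tsum_singleton] at hsplit
  simp only [Function.comp_apply, smul_zero, add_zero] at hsplit
  rw [thetaM_intCast hx, ← hsplit, add_div, Dgauss, gaussianWeight]

lemma Dgauss_le_thetaM (hσ : 0 < σ) (hq : q ≠ 0)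
    (hx : ∀ i, -(q : ℝ) / 2 < (x i : ℝ) ∧ (x i : ℝ) ≤ (q : ℝ) / 2) :
    Dgauss σ m x ≤ thetaM σ q m (fun i ↦ (x i : ZMod q)) := by
  rw [thetaM_intCast_eq_Dgauss_add hσ hq hx]
  exact le_add_of_nonneg_right
    (div_nonneg (tsum_nonneg fun _ ↦ (gaussianWeight_pos _ _).le) (rhoZm_pos hσ).le)

lemma thetaM_le_Dgauss_add_exp (hσ : 0 < σ) (hq : q ≠ 0) (hqσ : 2 * σ * √m ≤ q)
    (hx : ∀ i, -(q : ℝ) / 2 < (x i : ℝ) ∧ (x i : ℝ) ≤ (q : ℝ) / 2) :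
    thetaM σ q m (fun i ↦ (x i : ZMod q)) ≤
      Dgauss σ m x + exp (-(q : ℝ) ^ 2 / (4 * σ ^ 2)) := by
  have habs (i) : |(x i : ℝ)| ≤ q / 2 := abs_le.mpr ⟨by linarith [hx i], (hx i).2⟩
  have hradius : m * σ ^ 2 ≤ ((q : ℝ) / 2) ^ 2 := by
    calc m * σ ^ 2 = (σ * √m) ^ 2 := by rw [mul_pow, sq_sqrt m.cast_nonneg, mul_comm]
      _ ≤ ((q : ℝ) / 2) ^ 2 := by gcongr; linarith
  have hq' : (q : ℤ) ≠ 0 := by exact_mod_cast hq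
  have htail := tsum_gaussianWeight_comp_le_exp hσ
    ((add_smul_injective hq' x).comp Subtype.val_injective) hradius
    (fun k : ({0}ᶜ : Set (Fin m → ℤ)) ↦ sq_half_le_sum_add_smul_sq habs k.2)
  have hexp : -(((q : ℝ) / 2) ^ 2 / σ ^ 2) = -(q : ℝ) ^ 2 / (4 * σ ^ 2) := by ring
  rw [hexp] at htail
  rw [thetaM_intCast_eq_Dgauss_add hσ hq hx]
  gcongr
  exact (div_le_iff₀ (rhoZm_pos hσ)).mpr htail

end Folding

end

/-- For `m ≥ 1`, `q ≥ 2`, `σ > 0` with `q ≥ 2σ√m`, and every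
`x ∈ ℤ^m ∩ (−q/2, q/2]^m`:
`D_{ℤ^m,σ}(x) ≤ ϑ_{σ,q}(x) ≤ D_{ℤ^m,σ}(x) + exp(−q²/(4σ²))` and
`√D_{ℤ^m,σ}(x) ≤ √ϑ_{σ,q}(x) ≤ √D_{ℤ^m,σ}(x) + exp(−q²/(8σ²))`,
where `ϑ_{σ,q}` is evaluated at the class of `x` in `(ℤ/qℤ)^m`. -/
theorem stmt_2 (m q : ℕ) (σ : ℝ) (hm : 1 ≤ m) (hq : 2 ≤ q) (hσ : 0 < σ)
    (hqs : 2 * σ * Real.sqrt m ≤ q) (x : Fin m → ℤ)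
    (hx : ∀ i, -(q : ℝ) / 2 < (x i : ℝ) ∧ (x i : ℝ) ≤ (q : ℝ) / 2) :
    Dgauss σ m x ≤ thetaM σ q m (fun i => (x i : ZMod q)) ∧
      thetaM σ q m (fun i => (x i : ZMod q)) ≤
        Dgauss σ m x + Real.exp (-(q : ℝ) ^ 2 / (4 * σ ^ 2)) ∧
      Real.sqrt (Dgauss σ m x) ≤ Real.sqrt (thetaM σ q m (fun i => (x i : ZMod q))) ∧
      Real.sqrt (thetaM σ q m (fun i => (x i : ZMod q))) ≤
        Real.sqrt (Dgauss σ m x) + Real.exp (-(q : ℝ) ^ 2 / (8 * σ ^ 2)) := by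
  have hq₀ : q ≠ 0 := by omega
  have hlower := Dgauss_le_thetaM hσ hq₀ hx
  have hupper := thetaM_le_Dgauss_add_exp hσ hq₀ hqs hx
  have hsqrt_exp : √(Real.exp (-(q : ℝ) ^ 2 / (4 * σ ^ 2))) =
      Real.exp (-(q : ℝ) ^ 2 / (8 * σ ^ 2)) := by
    rw [← Real.exp_half]
    ring_nf
  refine ⟨hlower, hupper, Real.sqrt_le_sqrt hlower, (Real.sqrt_le_sqrt hupper).trans ?_⟩
  rw [← hsqrt_exp]
  exact sqrt_add_le_sqrt_add_sqrt (Dgauss_nonneg hσ x) (Real.exp_pos _).le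
end

section
/- Let d > 2 be a power of two and q a prime number with q ≡ 3 (mod 8). Then the polynomial X^d + 1 ∈ (ℤ/qℤ)[X] is the product of two distinct monic irreducible polynomials, each of degree d/2; consequently, the quotient ring R_q := (ℤ/qℤ)[X]/(X^d + 1) is isomorphic, as a ring, to the product of two finite fields each of cardinality q^{d/2}. -/
/-!
`X ^ 2 ^ k + 1` is the cyclotomic polynomial of index `2 ^ (k + 1)`, so over a finite field with `Q`
elements, `Q` odd, it is squarefree and the degree of each irreducible factor is the order of `Q`
modulo `2 ^ (k + 1)`. If `Q ≡ ±3 (mod 8)` then `Q ^ 2 = 1 + 8 * c` with `c` odd, so this order is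
`2 ^ (k - 1)`, half the degree: there are exactly two factors, and the Chinese remainder theorem
splits the quotient ring.
-/

open Polynomial

lemma orderOf_intCast_zmod_two_pow {a : ℤ} (ha : a % 8 = 3 ∨ a % 8 = 5) (n : ℕ) :
    orderOf (a : ZMod (2 ^ (n + 3))) = 2 ^ (n + 1) := by
  obtain ⟨c, hc, hsq⟩ : ∃ c : ℤ, ¬ 2 ∣ c ∧ a ^ 2 = 1 + 2 ^ 3 * c := by
    obtain ⟨t, rfl | rfl⟩ : ∃ t, a = 8 * t + 3 ∨ a = 8 * t + 5 := ⟨a / 8, by omega⟩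
    · exact ⟨8 * t ^ 2 + 6 * t + 1, by omega, by ring⟩
    · exact ⟨8 * t ^ 2 + 10 * t + 3, by omega, by ring⟩
  have horder_sq : orderOf ((a : ZMod (2 ^ (n + 3))) ^ 2) = 2 ^ n := by
    have hsq_cast : (a : ZMod (2 ^ (n + 3))) ^ 2 = 1 + (2 : ℕ) ^ 3 * c := mod_cast congrArg _ hsq
    rw [hsq_cast]
    exact ZMod.orderOf_one_add_mul_prime_pow Nat.prime_two 3 (by norm_num) (by norm_num) c
      (mod_cast hc) n
  have hdvd : orderOf (a : ZMod (2 ^ (n + 3))) ∣ 2 ^ (n + 1) := by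
    rw [orderOf_dvd_iff_pow_eq_one, pow_succ' 2 n, pow_mul, ← horder_sq, pow_orderOf_eq_one]
  have hne_one : (a : ZMod (2 ^ (n + 3))) ≠ 1 := by
    intro h
    have hmod : ((2 ^ (n + 3) : ℕ) : ℤ) ∣ a - 1 := by
      rw [← ZMod.intCast_zmod_eq_zero_iff_dvd]
      simp [h]
    have : (8 : ℤ) ∣ a - 1 := dvd_trans ⟨2 ^ n, by push_cast; ring⟩ hmod
    omega
  have heven : 2 ∣ orderOf (a : ZMod (2 ^ (n + 3))) := by
    obtain ⟨m, -, hm⟩ := (Nat.dvd_prime_pow Nat.prime_two).1 hdvd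
    rw [hm]
    refine dvd_pow_self 2 ?_
    rintro rfl
    exact hne_one (orderOf_eq_one_iff.1 hm)
  rw [← Nat.mul_div_cancel' heven, ← orderOf_pow_of_dvd two_ne_zero heven, horder_sq, pow_succ']

lemma cyclotomic_two_pow_succ (R : Type*) [CommRing R] (n : ℕ) :
    cyclotomic (2 ^ (n + 1)) R = X ^ 2 ^ n + 1 := by
  rw [cyclotomic_prime_pow_eq_geom_sum Nat.prime_two, Finset.sum_range_succ, Finset.sum_range_one,
    pow_zero, pow_one, add_comm]

/-- The Chinese remainder isomorphism for the principal ideals of two coprime elements. -/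
noncomputable def quotientSpanMulEquivProd {R : Type*} [CommRing R] {a b : R}
    (hab : IsCoprime a b) :
    R ⧸ Ideal.span {a * b} ≃+* (R ⧸ Ideal.span {a}) × (R ⧸ Ideal.span {b}) :=
  (Ideal.quotEquivOfEq (Ideal.span_singleton_mul_span_singleton a b).symm).trans
    (Ideal.quotientMulEquivQuotientProd _ _ ((Ideal.isCoprime_span_singleton_iff a b).2 hab))

section Field

variable {K : Type*} [Field K]

lemma isCoprime_of_monic_of_irreducible_of_ne {g h : K[X]} (hg : g.Monic) (hh : h.Monic)
    (hgi : Irreducible g) (hhi : Irreducible h) (hne : g ≠ h) : IsCoprime g h :=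
  hgi.coprime_iff_not_dvd.2 fun hdvd ↦
    hne (eq_of_monic_of_associated hg hh (hgi.associated_of_dvd hhi hdvd))

open UniqueFactorizationMonoid in
lemma prod_normalizedFactors_of_monic [DecidableEq K] {f : K[X]} (hf : f.Monic) :
    (normalizedFactors f).prod = f := by
  rw [prod_normalizedFactors_eq hf.ne_zero, hf.normalize_eq_self]

variable [Finite K]

lemma nonempty_quotient_span_ringEquiv_of_irreducible {L : Type*} [Field L] {g : K[X]}
    (hg : Irreducible g) (hL : Nat.card L = Nat.card K ^ g.natDegree) :
    Nonempty (K[X] ⧸ Ideal.span {g} ≃+* L) := by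
  have : Fact (Irreducible g) := ⟨hg⟩
  have : Module.Finite K (AdjoinRoot g) := (AdjoinRoot.powerBasis hg.ne_zero).finite
  have : Finite (AdjoinRoot g) := Module.finite_of_finite K
  have hcard : Nat.card (AdjoinRoot g) = Nat.card L := by
    rw [hL, Module.natCard_eq_pow_finrank (K := K), ← finrank_quotient_span_eq_natDegree (f := g)]
    rfl
  have : Finite L := Nat.finite_of_card_ne_zero (hcard ▸ Nat.card_pos.ne')
  have := Fintype.ofFinite (AdjoinRoot g)
  have := Fintype.ofFinite L
  rw [Nat.card_eq_fintype_card, Nat.card_eq_fintype_card] at hcard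
  exact ⟨FiniteField.ringEquivOfCardEq hcard⟩

lemma natDegree_of_irreducible_of_dvd_cyclotomic {n : ℕ} (hn : (Nat.card K).Coprime n) {g : K[X]}
    (hg : Irreducible g) (hdvd : g ∣ cyclotomic n K) :
    g.natDegree = orderOf (Nat.card K : ZMod n) := by
  have := Fintype.ofFinite K
  obtain ⟨p, _, f, hp, hcard⟩ := FiniteField.card' K
  have : Fact p.Prime := ⟨hp⟩
  rw [Nat.card_eq_fintype_card, hcard] at hn ⊢
  rw [natDegree_of_dvd_cyclotomic_of_irreducible hcard ((Nat.coprime_pow_left_iff f.pos p n).1 hn)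
    hdvd hg, ← orderOf_units, ZMod.coe_unitOfCoprime]

lemma squarefree_cyclotomic_of_coprime_card {n : ℕ} (hn : (Nat.card K).Coprime n) :
    Squarefree (cyclotomic n K) := by
  have := Fintype.ofFinite K
  have hcop : IsCoprime (Nat.card K : K) (n : K) := hn.cast
  rw [Nat.card_eq_fintype_card, Nat.cast_card_eq_zero, isCoprime_zero_left] at hcop
  have : NeZero (n : K) := ⟨hcop.ne_zero⟩
  exact squarefree_cyclotomic n K

open UniqueFactorizationMonoid in
lemma card_normalizedFactors_cyclotomic_mul_orderOf [DecidableEq K] {n : ℕ}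
    (hn : (Nat.card K).Coprime n) :
    (normalizedFactors (cyclotomic n K)).card * orderOf (Nat.card K : ZMod n) = n.totient := by
  have hdegree : ∀ P ∈ normalizedFactors (cyclotomic n K),
      P.natDegree = orderOf (Nat.card K : ZMod n) := fun P hP ↦
    natDegree_of_irreducible_of_dvd_cyclotomic hn (irreducible_of_normalized_factor P hP)
      (dvd_of_mem_normalizedFactors hP)
  calc
    _ = ((normalizedFactors (cyclotomic n K)).map natDegree).sum := by
      rw [Multiset.map_congr rfl hdegree, Multiset.map_const', Multiset.sum_replicate, smul_eq_mul]
    _ = (normalizedFactors (cyclotomic n K)).prod.natDegree :=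
      (natDegree_multiset_prod _ (zero_notMem_normalizedFactors _)).symm
    _ = n.totient := by
      rw [prod_normalizedFactors_of_monic (cyclotomic.monic n K), natDegree_cyclotomic]

open UniqueFactorizationMonoid in
lemma exists_cyclotomic_eq_mul_of_totient_eq_two_mul_orderOf {n : ℕ}
    (hn : (Nat.card K).Coprime n) (hord : n.totient = 2 * orderOf (Nat.card K : ZMod n)) :
    ∃ g h : K[X], g.Monic ∧ h.Monic ∧ Irreducible g ∧ Irreducible h ∧ g ≠ h ∧
      g.natDegree = orderOf (Nat.card K : ZMod n) ∧
      h.natDegree = orderOf (Nat.card K : ZMod n) ∧ cyclotomic n K = g * h := by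
  classical
  have hpos : 0 < orderOf (Nat.card K : ZMod n) := by
    have hn0 : n ≠ 0 := by
      rintro rfl
      exact Finite.one_lt_card.ne' ((Nat.coprime_zero_right _).1 hn)
    have := Nat.totient_pos.2 (Nat.pos_of_ne_zero hn0)
    omega
  have hcard : (normalizedFactors (cyclotomic n K)).card = 2 :=
    Nat.eq_of_mul_eq_mul_right hpos
      ((card_normalizedFactors_cyclotomic_mul_orderOf hn).trans hord)
  obtain ⟨g, h, hgh⟩ := Multiset.card_eq_two.1 hcard
  have hne : g ≠ h := by
    have hnodup := (squarefree_iff_nodup_normalizedFactors (cyclotomic_ne_zero n K)).1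
      (squarefree_cyclotomic_of_coprime_card hn)
    simpa [hgh] using hnodup
  have hfactor : ∀ P ∈ normalizedFactors (cyclotomic n K),
      P.Monic ∧ Irreducible P ∧ P.natDegree = orderOf (Nat.card K : ZMod n) := by
    intro P hP
    obtain ⟨hirr, hmonic, hdvd⟩ :=
      (Polynomial.mem_normalizedFactors_iff (cyclotomic_ne_zero n K)).1 hP
    exact ⟨hmonic, hirr, natDegree_of_irreducible_of_dvd_cyclotomic hn hirr hdvd⟩
  obtain ⟨hg, hgi, hgd⟩ := hfactor g (by simp [hgh])
  obtain ⟨hh, hhi, hhd⟩ := hfactor h (by simp [hgh])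
  have hfac : cyclotomic n K = g * h := by
    rw [← Multiset.prod_pair, ← hgh, prod_normalizedFactors_of_monic (cyclotomic.monic n K)]
  exact ⟨g, h, hg, hh, hgi, hhi, hne, hgd, hhd, hfac⟩

end Field

theorem stmt_14_general {K L : Type*} [Field K] [Finite K] [Field L] {d : ℕ} (hd : 2 < d)
    (hd2 : ∃ k, d = 2 ^ k) (hK : Nat.card K % 8 = 3 ∨ Nat.card K % 8 = 5)
    (hL : Nat.card L = Nat.card K ^ (d / 2)) :
    (∃ g h : K[X],
        g.Monic ∧ h.Monic ∧ Irreducible g ∧ Irreducible h ∧ g ≠ h ∧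
          g.natDegree = d / 2 ∧ h.natDegree = d / 2 ∧ (X ^ d + 1 : K[X]) = g * h) ∧
      Nonempty ((K[X] ⧸ Ideal.span {(X ^ d + 1 : K[X])}) ≃+* L × L) := by
  obtain ⟨n, rfl⟩ : ∃ n, d = 2 ^ (n + 2) := by
    obtain ⟨k, rfl⟩ := hd2
    have hk : 1 < k := (Nat.pow_lt_pow_iff_right one_lt_two).1 (by simpa using hd)
    exact ⟨k - 2, by rw [Nat.sub_add_cancel hk]⟩
  have hhalf : 2 ^ (n + 2) / 2 = 2 ^ (n + 1) := by rw [pow_succ, Nat.mul_div_cancel _ two_pos]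
  have hcop : (Nat.card K).Coprime (2 ^ (n + 3)) :=
    (Nat.coprime_two_right.2 (Nat.odd_iff.2 (by omega))).pow_right _
  have hord : orderOf (Nat.card K : ZMod (2 ^ (n + 3))) = 2 ^ (n + 1) := by
    exact_mod_cast orderOf_intCast_zmod_two_pow (a := Nat.card K) (by omega) n
  have htotient : (2 ^ (n + 3)).totient = 2 * orderOf (Nat.card K : ZMod (2 ^ (n + 3))) := by
    rw [hord, Nat.totient_prime_pow_succ Nat.prime_two]
    ring
  obtain ⟨g, h, hg, hh, hgi, hhi, hne, hgd, hhd, hfac⟩ :=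
    exists_cyclotomic_eq_mul_of_totient_eq_two_mul_orderOf hcop htotient
  rw [cyclotomic_two_pow_succ] at hfac
  rw [hord, ← hhalf] at hgd hhd
  refine ⟨⟨g, h, hg, hh, hgi, hhi, hne, hgd, hhd, hfac⟩, ?_⟩
  obtain ⟨eg⟩ := nonempty_quotient_span_ringEquiv_of_irreducible (L := L) hgi (by rw [hL, hgd])
  obtain ⟨eh⟩ := nonempty_quotient_span_ringEquiv_of_irreducible (L := L) hhi (by rw [hL, hhd])
  rw [hfac]
  exact ⟨(quotientSpanMulEquivProd
    (isCoprime_of_monic_of_irreducible_of_ne hg hh hgi hhi hne)).trans (eg.prodCongr eh)⟩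

/-- Let `d > 2` be a power of two and `q` a prime with `q ≡ 3 (mod 8)`. Then
`X^d + 1 ∈ (ℤ/qℤ)[X]` is the product of two distinct monic irreducible
polynomials, each of degree `d/2`; consequently
`R_q = (ℤ/qℤ)[X]/(X^d + 1)` is isomorphic, as a ring, to the product of two
finite fields, each of cardinality `q^{d/2}`. -/
theorem stmt_14 (d q : ℕ) [Fact q.Prime] (hd : 2 < d) (hd2 : ∃ k, d = 2 ^ k)
    (hq3 : q % 8 = 3) :
    (∃ g h : Polynomial (ZMod q),
        g.Monic ∧ h.Monic ∧ Irreducible g ∧ Irreducible h ∧ g ≠ h ∧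
          g.natDegree = d / 2 ∧ h.natDegree = d / 2 ∧
          (Polynomial.X ^ d + 1 : Polynomial (ZMod q)) = g * h) ∧
      Nonempty
        ((Polynomial (ZMod q) ⧸
            Ideal.span {(Polynomial.X ^ d + 1 : Polynomial (ZMod q))}) ≃+*
          GaloisField q (d / 2) × GaloisField q (d / 2)) ∧
      Nat.card (GaloisField q (d / 2)) = q ^ (d / 2) := by
  have hcard := GaloisField.card q (d / 2) (by omega)
  obtain ⟨hfac, hiso⟩ := stmt_14_general (K := ZMod q) (L := GaloisField q (d / 2)) hd hd2
    (by simp [hq3]) (by rw [hcard, Nat.card_zmod])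
  exact ⟨hfac, hiso, hcard⟩
end

section
/- Let d > 2 be a power of two, q a prime number with q ≡ 3 (mod 8), m ≥ n ≥ 1 integers, and R_q := (ℤ/qℤ)[X]/(X^d + 1). Then for every fixed v ∈ R_q^m with v ≠ 0, the number of matrices A ∈ R_q^{m×n} such that v = A·s for some s ∈ R_q^n is at most q^{dmn} · q^{dn} / q^{dm/2}; i.e., the proportion of such matrices among all of R_q^{m×n} is at most q^{d(n − m/2)}. -/
/-- `R_q = (ℤ/qℤ)[X]/(X^d + 1)`. -/
abbrev Rq (d q : ℕ) :=
  Polynomial (ZMod q) ⧸ Ideal.span {(Polynomial.X ^ d + 1 : Polynomial (ZMod q))}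

/-!
For fixed `s`, the map `A ↦ A s` is a homomorphism onto `I ^ m`, where `I` is the ideal generated by
the entries of `s`, so its nonempty fibres all have `|R| ^ (m n) / |I| ^ m` elements. Since `v ≠ 0`,
only `s ≠ 0` matters; then `I ≠ 0` has at least as many elements as some residue field of `R`, and
summing over the `|R| ^ n` vectors `s` gives the bound.

A residue field of `R = K[X]/(X ^ d + 1)` with `d = 2 ^ (t + 1)` contains an element of order
`2 ^ (t + 2)`, hence `2 ^ (t + 2)` divides `|K| ^ f - 1`, where `f` is its degree over `K`. As
`|K| ≡ ± 3 (mod 8)`, up to sign `|K|` has order `2 ^ t` modulo `2 ^ (t + 2)`, which forces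
`f ≥ 2 ^ t = d / 2`.
-/

section Counting

theorem ncard_fiber_mul_card_range_le {G H : Type*} [AddGroup G] [AddGroup H] (φ : G →+ H)
    (y : H) : {x | φ x = y}.ncard * Nat.card φ.range ≤ Nat.card G := by
  rw [← AddSubgroup.card_mul_index φ.ker, AddSubgroup.index_ker]
  gcongr
  obtain h | ⟨x₀, rfl⟩ := {x | φ x = y}.eq_empty_or_nonempty
  · simp [h]
  · have hcoset : {x | φ x = φ x₀} = (x₀ + ·) '' (φ.ker : Set G) := by
      ext x
      simp [AddMonoidHom.mem_ker, neg_add_eq_zero, eq_comm (a := φ x)]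
    rw [hcoset, Set.ncard_image_of_injective _ (add_right_injective x₀), ← Nat.card_coe_set_eq]
    rfl

variable {R : Type*} [CommRing R] {c : ℕ}

theorem le_card_of_forall_isMaximal_le_card_quotient {M : Type*} [AddCommGroup M] [Module R M]
    [Nontrivial M] [Finite M] (hc : ∀ P : Ideal R, P.IsMaximal → c ≤ Nat.card (R ⧸ P)) :
    c ≤ Nat.card M := by
  obtain ⟨x, hx⟩ := exists_ne (0 : M)
  obtain ⟨P, hP, hle⟩ := Ideal.exists_le_maximal (Ideal.torsionOf R M x)
    (mt (Ideal.torsionOf_eq_top_iff R x).mp hx)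
  let e := Ideal.quotTorsionOfEquivSpanSingleton R M x
  have : Finite (R ⧸ Ideal.torsionOf R M x) := Finite.of_equiv _ e.symm.toEquiv
  calc c ≤ Nat.card (R ⧸ P) := hc P hP
    _ ≤ Nat.card (R ⧸ Ideal.torsionOf R M x) :=
      Nat.card_le_card_of_surjective _ (Ideal.Quotient.factor_surjective hle)
    _ = Nat.card (Submodule.span R {x}) := Nat.card_congr e.toEquiv
    _ ≤ Nat.card M := Nat.card_le_card_of_injective _ Subtype.val_injective

variable {ι κ : Type*} [Fintype κ]

theorem exists_mulVec_eq_iff {s : κ → R} {w : ι → R} :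
    (∃ A : Matrix ι κ R, A.mulVec s = w) ↔ ∀ i, w i ∈ Ideal.span (Set.range s) := by
  simp only [Ideal.mem_span_range_iff_exists_fun, Classical.skolem, funext_iff]
  rfl

theorem card_range_mulVec [Fintype ι] (s : κ → R) :
    Nat.card (AddMonoidHom.range (Matrix.mulVec.addMonoidHomLeft (m := ι) s)) =
      Nat.card (Ideal.span (Set.range s)) ^ Fintype.card ι := by
  have hrange : (AddMonoidHom.range (Matrix.mulVec.addMonoidHomLeft (m := ι) s) : Set (ι → R)) =
      Set.univ.pi fun _ ↦ Ideal.span (Set.range s) := by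
    ext w
    simpa using! exists_mulVec_eq_iff
  calc _ = Nat.card (Set.univ.pi fun _ : ι ↦ (Ideal.span (Set.range s) : Set R)) :=
        congrArg (fun S : Set (ι → R) ↦ Nat.card S) hrange
    _ = Nat.card (ι → Ideal.span (Set.range s)) := Nat.card_congr (Equiv.Set.univPi _)
    _ = _ := by rw [Nat.card_fun, Nat.card_eq_fintype_card (α := ι)]

variable [Fintype ι] [Finite R]

theorem ncard_setOf_mulVec_eq_mul_pow_le
    (hc : ∀ P : Ideal R, P.IsMaximal → c ≤ Nat.card (R ⧸ P)) {v : ι → R} (hv : v ≠ 0) (s : κ → R) :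
    {A : Matrix ι κ R | v = A.mulVec s}.ncard * c ^ Fintype.card ι ≤
      Nat.card R ^ (Fintype.card ι * Fintype.card κ) := by
  obtain rfl | hs := eq_or_ne s 0
  · simp [hv]
  have : Nontrivial (Ideal.span (Set.range s)) := by
    simpa [Submodule.nontrivial_iff_ne_bot, Ideal.span_eq_bot, funext_iff] using hs
  calc _ ≤ {A : Matrix ι κ R | Matrix.mulVec.addMonoidHomLeft s A = v}.ncard *
        Nat.card (Ideal.span (Set.range s)) ^ Fintype.card ι := by
        simp only [eq_comm (a := v)]
        exact Nat.mul_le_mul_left _ (Nat.pow_le_pow_left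
          (le_card_of_forall_isMaximal_le_card_quotient hc) _)
    _ ≤ Nat.card (Matrix ι κ R) := by
        rw [← card_range_mulVec]
        exact ncard_fiber_mul_card_range_le _ v
    _ = _ := by simp [Matrix, Nat.card_fun, ← pow_mul, mul_comm]

theorem ncard_setOf_exists_mulVec_eq_mul_pow_le
    (hc : ∀ P : Ideal R, P.IsMaximal → c ≤ Nat.card (R ⧸ P)) {v : ι → R} (hv : v ≠ 0) :
    {A : Matrix ι κ R | ∃ s, v = A.mulVec s}.ncard * c ^ Fintype.card ι ≤
      Nat.card R ^ (Fintype.card ι * Fintype.card κ) * Nat.card R ^ Fintype.card κ := by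
  have := Fintype.ofFinite (κ → R)
  calc _ ≤ (∑ s : κ → R, {A : Matrix ι κ R | v = A.mulVec s}.ncard) * c ^ Fintype.card ι := by
        rw [Set.ofPred_exists]
        gcongr
        exact Set.ncard_iUnion_le_of_fintype _
    _ ≤ ∑ _s : κ → R, Nat.card R ^ (Fintype.card ι * Fintype.card κ) := by
        rw [Finset.sum_mul]
        exact Finset.sum_le_sum fun s _ ↦ ncard_setOf_mulVec_eq_mul_pow_le hc hv s
    _ = _ := by simp [← Nat.card_eq_fintype_card, Nat.card_fun, mul_comm]

end Counting

section ResidueFields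

theorem two_pow_dvd_of_two_pow_dvd_pow_sub_one {q : ℤ} {t n : ℕ} (hq : q % 8 = 3 ∨ q % 8 = 5)
    (h : 2 ^ (t + 2) ∣ q ^ n - 1) : 2 ^ t ∣ n := by
  have of_mod_eq_five {a : ℤ} (ha : a % 8 = 5) (han : 2 ^ (t + 2) ∣ a ^ n - 1) : 2 ^ t ∣ n := by
    obtain ⟨b, rfl⟩ : ∃ b, a = 1 + 4 * b := ⟨a / 4, by lia⟩
    rw [← ZMod.orderOf_one_add_four_mul b (by grind) t]
    apply orderOf_dvd_of_pow_eq_one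
    rw [← sub_eq_zero]
    exact_mod_cast (ZMod.intCast_zmod_eq_zero_iff_dvd _ (2 ^ (t + 2))).mpr (by exact_mod_cast han)
  obtain hq3 | hq5 := hq
  · obtain hn | hn := n.even_or_odd
    · exact of_mod_eq_five (a := -q) (by lia) (by rwa [hn.neg_pow])
    · obtain rfl | ht := eq_or_ne t 0
      · simp
      have hpow : q ^ n % 8 = 3 := by
        obtain ⟨j, rfl⟩ := hn
        have hq : q ≡ 3 [ZMOD 8] := hq3
        have hsq : q ^ 2 ≡ 1 [ZMOD 8] := hq.pow 2
        simpa [pow_succ _ (2 * j), pow_mul] using ((hsq.pow j).mul hq).eq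
      have h8 : (2 ^ 3 : ℤ) ∣ q ^ n - 1 := (pow_dvd_pow 2 (by lia)).trans h
      lia
  · exact of_mod_eq_five hq5 h

theorem card_pow_le_card_of_pow_eq_neg_one {K L : Type*} [Field K] [Field L] [Algebra K L]
    [Finite L] (hK : Nat.card K % 8 = 3 ∨ Nat.card K % 8 = 5) {x : L} {t : ℕ}
    (hx : x ^ 2 ^ (t + 1) = -1) : Nat.card K ^ 2 ^ t ≤ Nat.card L := by
  have hcard : Nat.card L = Nat.card K ^ Module.finrank K L := Module.natCard_eq_pow_finrank
  have hneg : (-1 : L) ≠ 1 := by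
    refine Ring.neg_one_ne_one_of_char_ne_two fun h2 ↦ ?_
    have := Fintype.ofFinite L
    have heven := FiniteField.even_card_of_char_two h2
    have hodd : Odd (Nat.card L) := hcard ▸ Odd.pow (Nat.odd_iff.mpr (by lia))
    rw [Nat.card_eq_fintype_card, Nat.odd_iff] at hodd
    lia
  have hx0 : x ≠ 0 := by
    rintro rfl
    simp at hx
  have horder : orderOf x = 2 ^ (t + 2) :=
    orderOf_eq_prime_pow (hx ▸ hneg) (by rw [pow_succ, pow_mul, hx, neg_one_sq])
  have hdvd : 2 ^ (t + 2) ∣ Nat.card K ^ Module.finrank K L - 1 := by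
    rw [← horder, ← hcard, ← Nat.card_units, ← Units.val_mk0 hx0, orderOf_units]
    exact orderOf_dvd_natCard _
  have hdeg : 2 ^ t ∣ Module.finrank K L := by
    refine two_pow_dvd_of_two_pow_dvd_pow_sub_one (q := Nat.card K) (by lia) ?_
    have hpos : 1 ≤ Nat.card K ^ Module.finrank K L := hcard ▸ Nat.card_pos
    exact_mod_cast Int.natCast_dvd_natCast.mpr hdvd
  rw [hcard]
  exact Nat.pow_le_pow_right (by lia) (Nat.le_of_dvd Module.finrank_pos hdeg)

open Polynomial

variable {R : Type*} [CommRing R]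

theorem monic_X_pow_add_one {d : ℕ} (hd : d ≠ 0) : (X ^ d + 1 : R[X]).Monic := by
  simpa using monic_X_pow_add_C (1 : R) hd

theorem finite_quotient_span_singleton [Finite R] {f : R[X]} (hf : f.Monic) :
    Finite (R[X] ⧸ Ideal.span {f}) :=
  have := hf.finite_quotient
  Module.finite_of_finite R

theorem card_quotient_span_singleton {f : R[X]} (hf : f.Monic) :
    Nat.card (R[X] ⧸ Ideal.span {f}) = Nat.card R ^ f.natDegree :=
  calc Nat.card (AdjoinRoot f) = Nat.card (Fin f.natDegree → R) :=
        Nat.card_congr (AdjoinRoot.powerBasis' hf).basis.equivFun.toEquiv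
    _ = _ := by simp [Nat.card_fun]

theorem card_pow_le_card_quotient_of_isMaximal {K : Type*} [Field K] {t : ℕ}
    (hK : Nat.card K % 8 = 3 ∨ Nat.card K % 8 = 5)
    (P : Ideal (K[X] ⧸ Ideal.span {(X ^ 2 ^ (t + 1) + 1 : K[X])})) (hP : P.IsMaximal) :
    Nat.card K ^ 2 ^ t ≤ Nat.card (_ ⧸ P) := by
  let := Ideal.Quotient.field P
  have : Finite K := Nat.finite_of_card_ne_zero (by lia)
  have := finite_quotient_span_singleton
    (monic_X_pow_add_one (R := K) (pow_ne_zero (t + 1) two_ne_zero))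
  have : Finite (_ ⧸ P) := Quotient.finite _
  refine card_pow_le_card_of_pow_eq_neg_one hK
    (x := Ideal.Quotient.mk P (Ideal.Quotient.mk _ X)) ?_
  rw [eq_neg_iff_add_eq_zero]
  have hmk : Ideal.Quotient.mk (Ideal.span {(X ^ 2 ^ (t + 1) + 1 : K[X])})
      (X ^ 2 ^ (t + 1) + 1) = 0 := Ideal.Quotient.mk_singleton_self _
  simpa only [map_add, map_pow, map_one, map_zero] using congrArg (Ideal.Quotient.mk P) hmk

end ResidueFields

open Polynomial in
theorem stmt_15_general {K ι κ : Type*} [Field K] [Fintype ι] [Fintype κ] {d : ℕ} (hd : 1 < d)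
    (hd2 : ∃ k, d = 2 ^ k) (hK : Nat.card K % 8 = 3 ∨ Nat.card K % 8 = 5)
    {v : ι → K[X] ⧸ Ideal.span {(X ^ d + 1 : K[X])}} (hv : v ≠ 0) :
    ({A : Matrix ι κ (K[X] ⧸ Ideal.span {(X ^ d + 1 : K[X])}) | ∃ s, v = A.mulVec s}.ncard : ℝ) ≤
      (Nat.card K : ℝ) ^ (d * Fintype.card ι * Fintype.card κ) *
        (Nat.card K : ℝ) ^ (d * Fintype.card κ) / (Nat.card K : ℝ) ^ (d * Fintype.card ι / 2) := by
  have : Finite K := Nat.finite_of_card_ne_zero (by lia)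
  obtain ⟨k, rfl⟩ := hd2
  obtain ⟨t, rfl⟩ : ∃ t, k = t + 1 := Nat.exists_eq_succ_of_ne_zero (by rintro rfl; simp at hd)
  have hmonic : (X ^ 2 ^ (t + 1) + 1 : K[X]).Monic := monic_X_pow_add_one (by simp)
  have := finite_quotient_span_singleton hmonic
  have hcardR : Nat.card (K[X] ⧸ Ideal.span {(X ^ 2 ^ (t + 1) + 1 : K[X])}) =
      Nat.card K ^ 2 ^ (t + 1) := by
    rw [card_quotient_span_singleton hmonic, ← C_1, natDegree_X_pow_add_C]
  have hbound := ncard_setOf_exists_mulVec_eq_mul_pow_le (κ := κ)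
    (card_pow_le_card_quotient_of_isMaximal hK) hv
  have hhalf : 2 ^ (t + 1) * Fintype.card ι / 2 = 2 ^ t * Fintype.card ι := by
    rw [pow_succ, mul_right_comm, Nat.mul_div_cancel _ two_pos]
  have hpos : (0 : ℝ) < Nat.card K := by exact_mod_cast Nat.card_pos
  rw [le_div_iff₀ (by positivity), hhalf, mul_assoc (2 ^ (t + 1))]
  simp only [hcardR, ← pow_mul] at hbound
  exact_mod_cast hbound

/-- Let `d > 2` be a power of two, `q` a prime with `q ≡ 3 (mod 8)` and
`m ≥ n ≥ 1`. For every fixed `v ∈ R_q^m` with `v ≠ 0`, the number of matrices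
`A ∈ R_q^{m×n}` such that `v = A·s` for some `s ∈ R_q^n` is at most
`q^{dmn}·q^{dn}/q^{dm/2}`. -/
theorem stmt_15 (d q m n : ℕ) [Fact q.Prime] (hd : 2 < d) (hd2 : ∃ k, d = 2 ^ k)
    (hq3 : q % 8 = 3) (hn : 1 ≤ n) (hmn : n ≤ m)
    (v : Fin m → Rq d q) (hv : v ≠ 0) :
    ({A : Matrix (Fin m) (Fin n) (Rq d q) |
          ∃ s : Fin n → Rq d q, v = A.mulVec s}.ncard : ℝ) ≤
      (q : ℝ) ^ (d * m * n) * (q : ℝ) ^ (d * n) / (q : ℝ) ^ (d * m / 2) := by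
  simpa using stmt_15_general (K := ZMod q) (κ := Fin n) (by lia) hd2 (by simp [hq3]) hv
end
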